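/- arXiv:1606.09052 — 2 statements merged into one kernel-verified Lean document; each statement's English description precedes it below -/
import Mathlib

section
/- Conservation of the Miura operator: under these hypotheses, C_{m,n} = C_{m,n-1} for all 0 ≤ m ≤ r+1 and all n ∈ ℤ; equivalently, the Miura operator μ_n = (D − x_{r+1,n})(D − x_{r,n})⋯(D − x_{1,n}) is independent of n. -/
/-- ξ_{α,n} := M_{α,n} · M_{α,n+1}⁻¹ -/
def xiv {R : Type*} [Ring R] (M Mi : ℕ → ℤ → R) (α : ℕ) (n : ℤ) : R :=
  M α n * Mi α (n + 1)

/-- ξ_{α,n}⁻¹ = M_{α,n+1} · M_{α,n}⁻¹ -/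
def xivInv {R : Type*} [Ring R] (M Mi : ℕ → ℤ → R) (α : ℕ) (n : ℤ) : R :=
  M α (n + 1) * Mi α n

/-- x_{α,n} := ξ_{α,n}⁻¹ · ξ_{α-1,n} -/
def xv {R : Type*} [Ring R] (M Mi : ℕ → ℤ → R) (α : ℕ) (n : ℤ) : R :=
  xivInv M Mi α n * xiv M Mi (α - 1) n

/-- The Miura coefficient C_{m,n} = Σ_{r+1 ≥ α₁ > ⋯ > α_m ≥ 1}
∏_{j=1}^m x_{α_j, n+(r+1-α_j)-(j-1)} (ordered product, j increasing left to right). -/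
def CMiura {R : Type*} [Ring R] (M Mi : ℕ → ℤ → R) (r : ℕ) (m : ℕ) (n : ℤ) : R :=
  ∑ S ∈ Finset.powersetCard m (Finset.Icc 1 (r + 1)),
    (((S.sort (· ≤ ·)).reverse.zipIdx.map Prod.swap).map
      (fun ji => xv M Mi ji.2 (n + ((r : ℤ) + 1 - (ji.2 : ℤ)) - (ji.1 : ℤ)))).prod

/-!
Write `g_{α,n} = ξ_{α,n}⁻¹`, so that `x_{α,n} = g_{α,n} g_{α-1,n}⁻¹`, and interpolate between
`x_{·,n}` and `x_{·,n-1}` by `y_{α,n} = g_{α,n} g_{α-1,n-1}⁻¹`. The M-system and the commutation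
relations make the factors satisfy the exchange relation
`(D - x_{α+1,n})(D - y_{α,n}) = (D - y_{α+1,n})(D - x_{α,n-1})`. Since `g_0` does not depend on
`n`, the rightmost factor of `μ_n` is `D - x_{1,n} = D - y_{1,n}`; pushing the `y`-factor to the
left turns the other factors, one at a time, into those of `μ_{n-1}`. At the left end
`y_{r+1,n} = x_{r+1,n-1}`, because `g_{r+1} = A` does not depend on `n` either.
-/

section DifferenceOperators

/-- The coefficients of `D⁻¹ ∘ L ∘ D`, where `D` is the shift `n ↦ n + 1` and `L` has
coefficients `F`. This turns `μ_n` into `μ_{n-1}`. -/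
def shiftConj {R : Type*} (F : ℕ → ℤ → R) : ℕ → ℤ → R := fun m n => F m (n - 1)

variable {R : Type*} [Semiring R]

/-- The signed coefficients of `(D - a) ∘ L`, where `L = ∑ (-1) ^ m F_m D ^ (k - m)`. They do not
depend on the order `k` of `L`, because `F_m` is indexed by the distance from the leading term. -/
def shiftSubComp (a : ℤ → R) (F : ℕ → ℤ → R) : ℕ → ℤ → R
  | 0, n => F 0 (n + 1)
  | m + 1, n => F (m + 1) (n + 1) + a n * F m n

theorem shiftSubComp_shiftSubComp_congr {a b a' b' : ℤ → R}
    (hmul : ∀ n, a n * b n = a' n * b' n) (hadd : ∀ n, a n + b (n + 1) = a' n + b' (n + 1))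
    (F : ℕ → ℤ → R) :
    shiftSubComp a (shiftSubComp b F) = shiftSubComp a' (shiftSubComp b' F) := by
  have hlin (s : R) (n : ℤ) : b (n + 1) * s + a n * s = b' (n + 1) * s + a' n * s := by
    rw [← add_mul, ← add_mul, add_comm, hadd, add_comm]
  funext m n
  rcases m with _ | _ | m
  · rfl
  · simp only [shiftSubComp, add_assoc, hlin]
  · simp only [shiftSubComp, mul_add, add_assoc, ← mul_assoc, hmul]
    rw [← add_assoc (b _ * _), hlin, add_assoc]

theorem shiftConj_shiftSubComp (a : ℤ → R) (F : ℕ → ℤ → R) :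
    shiftConj (shiftSubComp a F) = shiftSubComp (fun n => a (n - 1)) (shiftConj F) := by
  funext m n
  rcases m with _ | m <;> simp [shiftSubComp, shiftConj]

end DifferenceOperators

section OrderedProducts

theorem reverse_sort_le {α : Type*} [LinearOrder α] (S : Finset α) :
    (S.sort (· ≤ ·)).reverse = S.sort (· ≥ ·) :=
  List.Perm.eq_of_pairwise' (r := (· ≥ ·))
    (List.pairwise_reverse.2 (S.pairwise_sort (· ≤ ·))) (S.pairwise_sort (· ≥ ·))
    ((List.reverse_perm _).trans <|
      (S.sort_perm_toList (· ≤ ·)).trans (S.sort_perm_toList (· ≥ ·)).symm)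

theorem sum_powersetCard_succ_insert {α β : Type*} [DecidableEq α] [AddCommMonoid β]
    {a : α} {s : Finset α} (ha : a ∉ s) (m : ℕ) (f : Finset α → β) :
    ∑ S ∈ (insert a s).powersetCard (m + 1), f S =
      ∑ S ∈ s.powersetCard (m + 1), f S + ∑ S ∈ s.powersetCard m, f (insert a S) := by
  have notMem {k : ℕ} {S : Finset α} (hS : S ∈ s.powersetCard k) : a ∉ S :=
    Finset.notMem_mono (Finset.mem_powersetCard.1 hS).1 ha
  have hdisj : Disjoint (s.powersetCard (m + 1)) ((s.powersetCard m).image (insert a)) := by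
    refine Finset.disjoint_left.2 fun S hS hS' => ?_
    obtain ⟨T, -, rfl⟩ := Finset.mem_image.1 hS'
    exact notMem hS (Finset.mem_insert_self a T)
  rw [Finset.powersetCard_succ_insert ha, Finset.sum_union hdisj, Finset.sum_image]
  exact fun S hS T hT => Finset.insert_erase_invOn.2.injOn (notMem hS) (notMem hT)

variable {R : Type*} [Semiring R]

/-- The product `x_{α_1, c - α_1} x_{α_2, c - α_2 - 1} ⋯` over the elements `α_1 > α_2 > ⋯` of `S`,
which is the contribution of `S` to a Miura coefficient. -/
def descProd (x : ℕ → ℤ → R) (c : ℤ) (S : Finset ℕ) : R :=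
  ((S.sort (· ≥ ·)).mapIdx fun j α => x α (c - α - j)).prod

theorem descProd_empty (x : ℕ → ℤ → R) (c : ℤ) : descProd x c ∅ = 1 := by
  simp [descProd]

theorem descProd_insert (x : ℕ → ℤ → R) (c : ℤ) {a : ℕ} {S : Finset ℕ} (ha : ∀ b ∈ S, b < a) :
    descProd x c (insert a S) = x a (c - a) * descProd x (c - 1) S := by
  have ha' : a ∉ S := fun h => (ha a h).false
  have hidx (b j : ℕ) : c - b - (j + 1 : ℕ) = c - 1 - b - j := by push_cast; ring
  simp only [descProd, Finset.sort_insert (· ≥ ·) (fun b hb => (ha b hb).le) ha', List.mapIdx_cons,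
    List.prod_cons, Nat.cast_zero, sub_zero, hidx]

end OrderedProducts

section MiuraCoefficients

variable {R : Type*} [Semiring R]

/-- The signed coefficient of `D ^ (k - m)` in `(D - x_k) ⋯ (D - x_1)`; the Miura coefficient
`C_{m,n}` is the case `k = r + 1`. -/
def miuraCoeff (x : ℕ → ℤ → R) (k m : ℕ) (n : ℤ) : R :=
  ∑ S ∈ (Finset.Icc 1 k).powersetCard m, descProd x (n + k) S

theorem shiftConj_miuraCoeff_zero (x : ℕ → ℤ → R) :
    shiftConj (miuraCoeff x 0) = miuraCoeff x 0 := by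
  funext m n
  rcases m with _ | m
  · simp [shiftConj, miuraCoeff, descProd_empty]
  · have hempty : (Finset.Icc 1 0).powersetCard (m + 1) = ∅ :=
      Finset.powersetCard_eq_empty.2 (by simp)
    simp only [shiftConj, miuraCoeff, hempty, Finset.sum_empty]

theorem miuraCoeff_succ (x : ℕ → ℤ → R) (k : ℕ) :
    miuraCoeff x (k + 1) = shiftSubComp (x (k + 1)) (miuraCoeff x k) := by
  funext m n
  have hshift : n + (k + 1 : ℕ) = n + 1 + k := by push_cast; ring
  rcases m with _ | m
  · simp [miuraCoeff, shiftSubComp, descProd_empty]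
  · have hIcc : Finset.Icc 1 (k + 1) = insert (k + 1) (Finset.Icc 1 k) :=
      (Finset.insert_Icc_right_eq_Icc_add_one (by omega)).symm
    simp only [miuraCoeff, shiftSubComp]
    rw [hIcc, sum_powersetCard_succ_insert (by simp), hshift, Finset.mul_sum]
    congr 1
    refine Finset.sum_congr rfl fun S hS => ?_
    have hlt : ∀ b ∈ S, b < k + 1 := fun b hb =>
      Nat.lt_succ_of_le (Finset.mem_Icc.1 ((Finset.mem_powersetCard.1 hS).1 hb)).2
    rw [descProd_insert x _ hlt]
    congr 2 <;> push_cast <;> ring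

theorem miuraCoeff_succ_eq_shiftSubComp_shiftConj {x y : ℕ → ℤ → R} {r : ℕ} (hone : x 1 = y 1)
    (hmul : ∀ k < r, ∀ n, x (k + 2) n * y (k + 1) n = y (k + 2) n * x (k + 1) (n - 1))
    (hadd : ∀ k < r, ∀ n, x (k + 2) n + y (k + 1) (n + 1) = y (k + 2) n + x (k + 1) n) :
    ∀ k ≤ r, miuraCoeff x (k + 1) = shiftSubComp (y (k + 1)) (shiftConj (miuraCoeff x k)) := by
  intro k hk
  induction k with
  | zero => rw [miuraCoeff_succ, shiftConj_miuraCoeff_zero, hone]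
  | succ k ih =>
    calc miuraCoeff x (k + 2)
        = shiftSubComp (x (k + 2)) (shiftSubComp (y (k + 1)) (shiftConj (miuraCoeff x k))) := by
          rw [miuraCoeff_succ, ih (by omega)]
      _ = shiftSubComp (y (k + 2))
            (shiftSubComp (fun n => x (k + 1) (n - 1)) (shiftConj (miuraCoeff x k))) :=
          shiftSubComp_shiftSubComp_congr (hmul k hk)
            (fun n => by rw [add_sub_cancel_right, hadd k hk]) _
      _ = shiftSubComp (y (k + 2)) (shiftConj (miuraCoeff x (k + 1))) := by
          rw [miuraCoeff_succ x k, shiftConj_shiftSubComp]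

theorem shiftConj_miuraCoeff_of_exchange {x y : ℕ → ℤ → R} {r : ℕ} (hone : x 1 = y 1)
    (hmul : ∀ k < r, ∀ n, x (k + 2) n * y (k + 1) n = y (k + 2) n * x (k + 1) (n - 1))
    (hadd : ∀ k < r, ∀ n, x (k + 2) n + y (k + 1) (n + 1) = y (k + 2) n + x (k + 1) n)
    (htop : ∀ n, y (r + 1) n = x (r + 1) (n - 1)) :
    shiftConj (miuraCoeff x (r + 1)) = miuraCoeff x (r + 1) := by
  calc shiftConj (miuraCoeff x (r + 1))
      = shiftSubComp (y (r + 1)) (shiftConj (miuraCoeff x r)) := by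
        rw [miuraCoeff_succ, shiftConj_shiftSubComp, funext htop]
    _ = miuraCoeff x (r + 1) :=
        (miuraCoeff_succ_eq_shiftSubComp_shiftConj hone hmul hadd r le_rfl).symm

end MiuraCoefficients

theorem shiftConj_miuraCoeff_of_eq_ratio {R : Type*} [Ring R] {r : ℕ} {x : ℕ → ℤ → R}
    (g : ℕ → ℤ → Rˣ) (hx : ∀ k ≤ r, ∀ n, x (k + 1) n = ↑(g (k + 1) n * (g k n)⁻¹))
    (hzero : ∀ n, g 0 (n - 1) = g 0 n) (htop : ∀ n, g (r + 1) (n - 1) = g (r + 1) n)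
    (hexch : ∀ k < r, ∀ n,
      (g (k + 2) n : R) * (↑(g (k + 1) n)⁻¹ - ↑(g (k + 1) (n - 1))⁻¹) =
        (g (k + 1) n - g (k + 1) (n + 1)) * ↑(g k n)⁻¹) :
    shiftConj (miuraCoeff x (r + 1)) = miuraCoeff x (r + 1) := by
  refine shiftConj_miuraCoeff_of_exchange
    (y := fun k n => ↑(g k n * (g (k - 1) (n - 1))⁻¹)) ?_ ?_ ?_ ?_
  · funext n
    simp [hx 0 r.zero_le, hzero]
  · intro k hk n
    simp [hx (k + 1) hk, hx k hk.le, mul_assoc]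
  · intro k hk n
    have h := hexch k hk n
    rw [mul_sub, sub_mul, sub_eq_sub_iff_add_eq_add, add_comm (_ * _) (_ * _)] at h
    simpa [hx (k + 1) hk, hx k hk.le, add_comm (g (k + 2) n * _ : R)] using h
  · intro n
    simp [hx r le_rfl, htop]

section QuantumMSystem

/-- The quotient `M_{α,n+1} M_{α,n}⁻¹` of consecutive entries, which is `ξ_{α,n}⁻¹`. -/
def stepRatio {G : Type*} [Group G] (M : ℕ → ℤ → G) (α : ℕ) (n : ℤ) : G :=
  M α (n + 1) * (M α n)⁻¹

theorem stepRatio_eq_of_eq_zpow_mul {G : Type*} [Group G] {M : ℕ → ℤ → G} {α : ℕ} {A Δ : G}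
    (hM : ∀ n, M α n = A ^ n * Δ) (n : ℤ) : stepRatio M α n = A := by
  rw [stepRatio, hM, hM]
  group

variable {R : Type*} [Ring R]

/-- A quantum M-system with invertible entries: the values `M_{α,n}` for `α ≤ r + 1` satisfy the
M-system at the interior levels `1 ≤ α ≤ r`, written with `α` shifted by one, and the commutation
relations between equal and between consecutive times. -/
structure IsQuantumMSystem (q : Rˣ) (r : ℕ) (M : ℕ → ℤ → Rˣ) : Prop where
  central (x : R) : Commute (q : R) x
  mSystem {α : ℕ} (hα : α < r) (n : ℤ) :
    (↑(q ^ (α + 1) * M (α + 1) (n + 1)) : R) * M (α + 1) (n - 1) =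
      ↑(M (α + 1) n ^ 2) - ↑(M (α + 2) n * M α n)
  commute {α β : ℕ} (hα : α ≤ r + 1) (hβ : β ≤ r + 1) (n : ℤ) : Commute (M α n) (M β n)
  semiconjBy {α β : ℕ} (hα : α ≤ r + 1) (hβ : β ≤ r + 1) (n : ℤ) :
    SemiconjBy (M α n) (M β (n + 1)) (q ^ min α β * M β (n + 1))

theorem mul_inv_sub_mul_inv_of_semiconjBy {a b c : Rˣ} {p s : R} (h : SemiconjBy a b c)
    (hp : (c : R) * p = ↑(a ^ 2) - s) :
    (↑(a * b⁻¹) : R) - p * ↑a⁻¹ = ↑c⁻¹ * s * ↑a⁻¹ := by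
  have hp' : p = ↑c⁻¹ * (↑(a ^ 2) - s) := by rw [← hp, Units.inv_mul_cancel_left]
  rw [hp', h.inv_right.eq]
  simp [mul_sub, sub_mul, mul_assoc, pow_two]

theorem mul_inv_sub_mul_inv_of_central {a b Q : Rˣ} {c s : R} (hQ : ∀ x : R, Commute (Q : R) x)
    (h : SemiconjBy a b (Q * b)) (hc : (Q : R) * c * a = ↑(b ^ 2) - s) :
    (↑(b * a⁻¹) : R) - c * ↑b⁻¹ = s * ↑(a * b)⁻¹ := by
  have hcQ : c * ↑b⁻¹ * ↑(a * b) = Q * c * a := by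
    rw [h.eq, (hQ c).eq, (Units.ext (hQ b) : Q * b = b * Q)]
    simp [mul_assoc]
  rw [Units.eq_mul_inv_iff_mul_eq, sub_mul, hcQ, hc]
  simp [mul_assoc, pow_two]

namespace IsQuantumMSystem

variable {q : Rˣ} {r : ℕ} {M : ℕ → ℤ → Rˣ} {α : ℕ}

theorem semiconjBy_self (h : IsQuantumMSystem q r M) (hα : α ≤ r + 1) (n : ℤ) :
    SemiconjBy (M α n) (M α (n + 1)) (q ^ α * M α (n + 1)) := by
  simpa using h.semiconjBy hα hα n

theorem inv_stepRatio_sub_inv_stepRatio (h : IsQuantumMSystem q r M) (hα : α < r) (n : ℤ) :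
    (↑(stepRatio M (α + 1) n)⁻¹ : R) - ↑(stepRatio M (α + 1) (n - 1))⁻¹ =
      ↑((q ^ (α + 1) * M (α + 1) (n + 1))⁻¹ * (M (α + 2) n * M α n) * (M (α + 1) n)⁻¹) := by
  have hab := h.semiconjBy_self (α := α + 1) (by omega) n
  simpa [stepRatio] using mul_inv_sub_mul_inv_of_semiconjBy hab (h.mSystem hα n)

theorem stepRatio_sub_stepRatio (h : IsQuantumMSystem q r M) (hα : α < r) (n : ℤ) :
    (↑(stepRatio M (α + 1) n) : R) - ↑(stepRatio M (α + 1) (n + 1)) =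
      ↑(M (α + 2) (n + 1) * M α (n + 1) * (M (α + 1) n * M (α + 1) (n + 1))⁻¹) := by
  have hab := h.semiconjBy_self (α := α + 1) (by omega) n
  have hq (x : R) : Commute (↑(q ^ (α + 1)) : R) x := by
    simpa using (h.central x).pow_left (α + 1)
  have hsys := h.mSystem hα (n + 1)
  rw [add_sub_cancel_right, Units.val_mul] at hsys
  simpa [stepRatio] using mul_inv_sub_mul_inv_of_central hq hab hsys

theorem stepRatio_exchange (h : IsQuantumMSystem q r M) (hα : α < r) (n : ℤ) :
    (↑(stepRatio M (α + 2) n) : R) *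
        (↑(stepRatio M (α + 1) n)⁻¹ - ↑(stepRatio M (α + 1) (n - 1))⁻¹) =
      (↑(stepRatio M (α + 1) n) - ↑(stepRatio M (α + 1) (n + 1))) * ↑(stepRatio M α n)⁻¹ := by
  rw [h.inv_stepRatio_sub_inv_stepRatio hα, h.stepRatio_sub_stepRatio hα, ← Units.val_mul,
    ← Units.val_mul, Units.val_inj]
  have hα₂ : α + 2 ≤ r + 1 := by omega
  have hα₁ : α + 1 ≤ r + 1 := by omega
  have hα₀ : α ≤ r + 1 := by omega
  set a := M (α + 1) n
  set b := M (α + 1) (n + 1)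
  set u := M (α + 2) n
  set v := M (α + 2) (n + 1)
  set w := M α n
  set t := M α (n + 1)
  have hub : u * b⁻¹ = (q ^ (α + 1) * b)⁻¹ * u := by
    simpa using (h.semiconjBy hα₂ hα₁ n).inv_right.eq
  have hwa : Commute w a⁻¹ := (h.commute hα₀ hα₁ n).inv_right
  have htb : Commute t b⁻¹ := (h.commute hα₀ hα₁ (n + 1)).inv_right
  have hat : SemiconjBy a t (q ^ α * t) := by simpa using h.semiconjBy hα₁ hα₀ n
  have hwt : SemiconjBy w t (q ^ α * t) := h.semiconjBy_self hα₀ n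
  have htaw : Commute (a⁻¹ * w) t := hat.inv_symm_left.mul_left hwt
  calc stepRatio M (α + 2) n * ((q ^ (α + 1) * b)⁻¹ * (u * w) * a⁻¹)
      = v * u⁻¹ * ((q ^ (α + 1) * b)⁻¹ * u) * w * a⁻¹ := by simp only [stepRatio, mul_assoc, u, v]
    _ = v * b⁻¹ * (a⁻¹ * w) := by rw [← hub, ← hwa.eq]; group
    _ = v * b⁻¹ * (t * (a⁻¹ * w) * t⁻¹) := by rw [← htaw.eq, mul_inv_cancel_right]
    _ = v * (t * b⁻¹) * (a⁻¹ * w) * t⁻¹ := by rw [htb.eq]; group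
    _ = v * t * (a * b)⁻¹ * (stepRatio M α n)⁻¹ := by simp only [stepRatio, t, w]; group

end IsQuantumMSystem

end QuantumMSystem

theorem exists_units_val_eq {ι κ R : Type*} [Monoid R] {p : ι → Prop} {f f' : ι → κ → R}
    (hl : ∀ i k, p i → f i k * f' i k = 1) (hr : ∀ i k, p i → f' i k * f i k = 1) :
    ∃ u : ι → κ → Rˣ, ∀ i k, p i → (u i k : R) = f i k ∧ ↑(u i k)⁻¹ = f' i k := by
  classical
  exact ⟨fun i k => if h : p i then ⟨f i k, f' i k, hl i k h, hr i k h⟩ else 1,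
    fun i k hi => by simp [hi]⟩

theorem CMiura_eq_miuraCoeff {R : Type*} [Ring R] (M Mi : ℕ → ℤ → R) (r : ℕ) :
    CMiura M Mi r = miuraCoeff (xv M Mi) (r + 1) := by
  funext m n
  have hidx (α j : ℕ) : n + (r + 1 - α : ℤ) - j = n + (r + 1 : ℕ) - α - j := by push_cast; ring
  simp [CMiura, miuraCoeff, descProd, reverse_sort_le, List.mapIdx_eq_zipIdx_map, hidx,
    Function.comp_def]

theorem xv_succ_eq_stepRatio {R : Type*} [Ring R] {M Mi : ℕ → ℤ → R} {u : ℕ → ℤ → Rˣ} {r : ℕ}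
    (hu : ∀ α n, α ≤ r + 1 → (u α n : R) = M α n ∧ ↑(u α n)⁻¹ = Mi α n) {α : ℕ} (hα : α ≤ r)
    (n : ℤ) : xv M Mi (α + 1) n = ↑(stepRatio u (α + 1) n * (stepRatio u α n)⁻¹) := by
  have hval {β : ℕ} (hβ : β ≤ α + 1) (k : ℤ) := (hu β k (by omega)).1
  have hinv {β : ℕ} (hβ : β ≤ α + 1) (k : ℤ) := (hu β k (by omega)).2
  simp [xv, xiv, xivInv, stepRatio, ← hval, ← hinv]

theorem quantum_Q_Miura_conservation
    {R : Type*} [Ring R] (q A Δ : Rˣ)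
    (hq : ∀ x : R, (q : R) * x = x * (q : R))
    (r : ℕ) (hr : 1 ≤ r)
    (M Mi : ℕ → ℤ → R)
    (hM0 : ∀ n : ℤ, M 0 n = 1)
    (hMtop : ∀ n : ℤ, M (r + 2) n = 0)
    (hMiL : ∀ (α : ℕ) (n : ℤ), α ≤ r + 1 → M α n * Mi α n = 1)
    (hMiR : ∀ (α : ℕ) (n : ℤ), α ≤ r + 1 → Mi α n * M α n = 1)
    (hMsys : ∀ (α : ℕ) (n : ℤ), 1 ≤ α → α ≤ r + 1 →
      (q : R) ^ α * M α (n + 1) * M α (n - 1) = M α n ^ 2 - M (α + 1) n * M (α - 1) n)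
    (hcom : ∀ (α β ε : ℕ) (n : ℤ), ε ≤ 1 → α ≤ r + 1 → β ≤ r + 1 →
      M α n * M β (n + (ε : ℤ)) = (q : R) ^ (ε * min α β) * M β (n + (ε : ℤ)) * M α n)
    (hAΔ : ∀ n : ℤ, M (r + 1) n = ((A ^ n : Rˣ) : R) * (Δ : R))
    (hΔM : ∀ (α : ℕ) (n : ℤ), 1 ≤ α → α ≤ r + 1 →
      (Δ : R) * M α n = ((q ^ ((α : ℤ) * n) : Rˣ) : R) * M α n * (Δ : R))
    (hAM : ∀ (α : ℕ) (n : ℤ), 1 ≤ α → α ≤ r + 1 →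
      (A : R) * M α n = ((q ^ (-(α : ℤ)) : Rˣ) : R) * M α n * (A : R))
    (hΔA : (Δ : R) * (A : R) = (q : R) ^ (r + 1) * (A : R) * (Δ : R))
    (hext : ∀ (α β : ℕ) (n p : ℤ), α ≤ r + 1 → β ≤ r + 1 →
      |p| ≤ |(β : ℤ) - (α : ℤ)| + 1 →
      M α n * M β (n + p) = ((q ^ (p * ((min α β : ℕ) : ℤ)) : Rˣ) : R) * M β (n + p) * M α n) :
    ∀ (m : ℕ) (n : ℤ), m ≤ r + 1 → CMiura M Mi r m n = CMiura M Mi r m (n - 1) := by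
  obtain ⟨u, hu⟩ := exists_units_val_eq hMiL hMiR
  have hval (α : ℕ) (hα : α ≤ r + 1) (n : ℤ) : (u α n : R) = M α n := (hu α n hα).1
  have hsys : IsQuantumMSystem q r u := by
    refine ⟨hq, fun {α} hα n => ?_, fun {α β} hα hβ n => ?_, fun {α β} hα hβ n => ?_⟩
    · simpa [hval (α + 2) (by omega), hval (α + 1) (by omega), hval α (by omega)]
        using hMsys (α + 1) n (by omega) (by omega)
    · apply SemiconjBy.units_of_val
      simpa [SemiconjBy, hval α hα, hval β hβ] using hcom α β 0 n zero_le_one hα hβ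
    · apply SemiconjBy.units_of_val
      simpa [SemiconjBy, hval α hα, hval β hβ] using hcom α β 1 n le_rfl hα hβ
  have hzero (n : ℤ) : stepRatio u 0 n = 1 :=
    stepRatio_eq_of_eq_zpow_mul (Δ := 1) (fun n => Units.ext (by simp [hval, hM0])) n
  have htop (n : ℤ) : stepRatio u (r + 1) n = A :=
    stepRatio_eq_of_eq_zpow_mul (fun n => Units.ext (by rw [hval _ le_rfl, hAΔ, Units.val_mul])) n
  have hconj := shiftConj_miuraCoeff_of_eq_ratio (stepRatio u)
    (fun k hk n => xv_succ_eq_stepRatio hu hk n) (by simp [hzero]) (by simp [htop])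
    (fun k hk n => hsys.stepRatio_exchange hk n)
  intro m n _
  rw [CMiura_eq_miuraCoeff]
  exact (congrFun₂ hconj m n).symm
end

section
/- Exchange relations for the opposite current (componentwise form of relation (nmcom) of the Drinfeld-type presentation): under these hypotheses, define F_n := A^{−n}·M_{r,n}·Δ^{−1} for n ∈ ℤ. Then for all a,b ∈ ℤ, [F_{a+1}, F_b]_{q^{−1}} + [F_{b+1}, F_a]_{q^{−1}} = 0, i.e. F_{a+1}·F_b − q^{−1}·F_b·F_{a+1} + F_{b+1}·F_a − q^{−1}·F_a·F_{b+1} = 0; this is the componentwise form of (z − q^{−1}w)𝔣(z)𝔣(w) + (w − q^{−1}z)𝔣(w)𝔣(z) = 0 for the current 𝔣(z) = Σ_n z^{−n}·q^{n/2}·F_n. -/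
/-!
The ratios `x α n = M α n * (M (α + 1) n)⁻¹`, set to zero outside `0 ≤ α ≤ r`, satisfy a closed
system of `q`-commutation and evolution relations (`RatioSystem`). This system has a flow whose
logarithmic derivative is `x α (n + 1) * ((x α n)⁻¹ - (x (α + 1) n)⁻¹)`: moving along it to first
order gives another solution, over the dual numbers. As `(x (r + 1) n)⁻¹` is read as zero, the flow
acts on the last ratio as the time shift `x r n ↦ x r (n + 1)`. Differentiating the exchange
relation of `x r` at `(a, b)` therefore gives the sum of those at `(a + 1, b)` and `(a, b + 1)`, and
all relations follow by induction on `b - a` from `x r n * x r (n + 1) = q • (x r (n + 1) * x r n)`.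
Finally `F n = q ^ (-n) • x r n`, because `M (r + 1) n = A ^ n * Δ`.
-/

open TrivSqZeroExt

section QCommute

variable {𝕜 R : Type*} [CommRing 𝕜] [Ring R] [Algebra 𝕜 R] {q : 𝕜ˣ} {x x' y y' : R} {i j : ℤ}

/-- `x` and `y` commute up to the scalar `q ^ j`. -/
def QCommute (q : 𝕜ˣ) (j : ℤ) (x y : R) : Prop :=
  x * y = q ^ j • (y * x)

namespace QCommute

theorem zero_left (y : R) : QCommute q j 0 y := by
  simp [QCommute]

theorem zero_right (x : R) : QCommute q j x 0 := by
  simp [QCommute]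

theorem refl (x : R) : QCommute q 0 x x := by
  simp [QCommute]

theorem commute (h : QCommute q 0 x y) : Commute x y := by
  rw [Commute, SemiconjBy, h, zpow_zero, one_smul]

theorem symm (h : QCommute q j x y) : QCommute q (-j) y x := by
  rw [QCommute, h, smul_smul, ← zpow_add, neg_add_cancel, zpow_zero, one_smul]

theorem mul_left (h : QCommute q i x y) (h' : QCommute q j x' y) :
    QCommute q (i + j) (x * x') y := by
  rw [QCommute, mul_assoc, h', mul_smul_comm, ← mul_assoc, h, smul_mul_assoc, smul_smul,
    ← zpow_add, add_comm, mul_assoc]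

theorem mul_right (h : QCommute q i x y) (h' : QCommute q j x y') :
    QCommute q (i + j) x (y * y') := by
  simpa [add_comm] using (h.symm.mul_left h'.symm).symm

theorem inv_right (h : QCommute q j x y) (hr : y * y' = 1) (hl : y' * y = 1) :
    QCommute q (-j) x y' :=
  calc
    x * y' = y' * (y * x) * y' := by rw [← mul_assoc, hl, one_mul]
    _ = q ^ (-j) • (y' * (x * (y * y'))) := by
      rw [h.symm, mul_smul_comm, smul_mul_assoc, mul_assoc, mul_assoc]
    _ = q ^ (-j) • (y' * x) := by rw [hr, mul_one]

theorem inv_left (h : QCommute q j x y) (hr : x * x' = 1) (hl : x' * x = 1) :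
    QCommute q (-j) x' y := by
  simpa using (h.symm.inv_right hr hl).symm

theorem zpow_left {x : Rˣ} (h : QCommute q j (x : R) y) (n : ℤ) :
    QCommute q (n * j) ((x ^ n : Rˣ) : R) y := by
  induction n with
  | zero => simp [QCommute]
  | succ n ih =>
    rw [zpow_add_one, Units.val_mul, add_one_mul]
    exact ih.mul_left h
  | pred n ih =>
    rw [zpow_sub_one, Units.val_mul, sub_one_mul]
    exact ih.mul_left (h.inv_left x.mul_inv x.inv_mul)

theorem zpow_neg_mul_mul_inv {u v : Rˣ} (hu : QCommute q i (u : R) y)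
    (hv : QCommute q j (v : R) (u : R)) (n : ℤ) :
    ((u ^ (-n) : Rˣ) : R) * y * ((v⁻¹ : Rˣ) : R) =
      q ^ (-(n * (i + j))) • (y * (((u ^ n * v)⁻¹ : Rˣ) : R)) := by
  have huv : QCommute q (-(-n * -j)) ((u ^ (-n) : Rˣ) : R) ((v⁻¹ : Rˣ) : R) :=
    (hv.symm.zpow_left (-n)).inv_right v.mul_inv v.inv_mul
  rw [hu.zpow_left (-n), smul_mul_assoc, mul_assoc, huv, mul_smul_comm, smul_smul, ← zpow_add,
    mul_inv_rev, ← zpow_neg, Units.val_mul]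
  ring_nf

end QCommute

end QCommute

section Tangent

variable {𝕜 R : Type*} [CommRing 𝕜] [Ring R] [Algebra 𝕜 R] {q : 𝕜ˣ} {x x' y y' : R} {i j : ℤ}

/-- The dual number `x + ε x'`: the element `x` together with its derivative `x'` along a
first-order deformation. -/
def tangent (x x' : R) : DualNumber R :=
  inl x + inr x'

@[simp]
theorem fst_tangent (x x' : R) : (tangent x x').fst = x := by
  simp [tangent]

@[simp]
theorem snd_tangent (x x' : R) : (tangent x x').snd = x' := by
  simp [tangent]

theorem qCommute_tangent_iff :
    QCommute q j (tangent x x') (tangent y y') ↔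
      QCommute q j x y ∧ x * y' + x' * y = q ^ j • (y * x' + y' * x) := by
  simp [QCommute, TrivSqZeroExt.ext_iff, Units.smul_def]

/-- After cancelling `x * y` on the right, the `ε`-part of this relation reads
`(1 - q ^ i) • (s - s') = (1 - q ^ j) • (t - t')`. -/
theorem QCommute.tangent_logDeriv {s s' t t' : R} (hxy : QCommute q i x y)
    (hys : QCommute q i y s) (hyt : QCommute q j y t)
    (hxs : QCommute q i x s') (hxt : QCommute q j x t')
    (hs : i ≠ 0 → s = s') (ht : j ≠ 0 → t = t') :
    QCommute q i (tangent x ((s - t) * x)) (tangent y ((s' - t') * y)) := by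
  have hs' : s + q ^ i • s' = s' + q ^ i • s := by
    by_cases hi : i = 0
    · simp [hi, add_comm]
    · rw [hs hi]
  have ht' : t + q ^ j • t' = t' + q ^ j • t := by
    by_cases hj : j = 0
    · simp [hj, add_comm]
    · rw [ht hj]
  have hst : q ^ i • s' - q ^ j • t' + (s - t) = q ^ i • s - q ^ j • t + (s' - t') := by
    linear_combination (norm := abel) hs' - ht'
  have hx : x * ((s' - t') * y) = (q ^ i • s' - q ^ j • t') * (x * y) := by
    rw [← mul_assoc, mul_sub, hxs, hxt]
    simp only [sub_mul, smul_mul_assoc, mul_assoc]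
  have hy : y * ((s - t) * x) = (q ^ i • s - q ^ j • t) * (y * x) := by
    rw [← mul_assoc, mul_sub, hys, hyt]
    simp only [sub_mul, smul_mul_assoc, mul_assoc]
  refine qCommute_tangent_iff.2 ⟨hxy, ?_⟩
  rw [hx, hy, mul_assoc, mul_assoc, ← add_mul, ← add_mul, hst, hxy, mul_smul_comm]

end Tangent

section ExchangeRelation

variable {𝕜 R : Type*} [CommRing 𝕜] [Ring R] [Algebra 𝕜 R] {q : 𝕜ˣ} {f : ℤ → R} {a b : ℤ}

/-- The coefficient at `(a, b)` of the quadratic exchange relation of the current with modes `f`,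
written so that it is symmetric under `a ↔ b`. -/
def ExchangeRelation (q : 𝕜ˣ) (f : ℤ → R) (a b : ℤ) : Prop :=
  f a * f (b + 1) + f b * f (a + 1) = q • (f (b + 1) * f a + f (a + 1) * f b)

namespace ExchangeRelation

theorem symm (h : ExchangeRelation q f a b) : ExchangeRelation q f b a := by
  rw [ExchangeRelation, add_comm, h, add_comm]

theorem zpow_smul (h : ExchangeRelation q f a b) (c : 𝕜ˣ) :
    ExchangeRelation q (fun n ↦ c ^ n • f n) a b := by
  have hc (m n k : ℤ) (hk : m + n = k) : c ^ m • f m * c ^ n • f n = c ^ k • (f m * f n) := by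
    rw [smul_mul_smul_comm, ← zpow_add, hk]
  simp only [ExchangeRelation]
  rw [hc a (b + 1) (a + b + 1) (by ring), hc b (a + 1) (a + b + 1) (by ring),
    hc (b + 1) a (a + b + 1) (by ring), hc (a + 1) b (a + b + 1) (by ring),
    ← smul_add, ← smul_add, h, smul_comm]

theorem sub_inv_smul_eq_zero (h : ExchangeRelation q f a b) :
    f (a + 1) * f b - q⁻¹ • (f b * f (a + 1)) + f (b + 1) * f a - q⁻¹ • (f a * f (b + 1)) = 0 := by
  have hinv : q⁻¹ • (f a * f (b + 1) + f b * f (a + 1)) = f (b + 1) * f a + f (a + 1) * f b :=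
    inv_smul_eq_iff.2 h
  rw [smul_add] at hinv
  linear_combination (norm := abel) -hinv

/-- The `ε`-part of the relation at `(a, b)` is the sum of the relations at `(a + 1, b)` and
`(a, b + 1)`. -/
theorem succ_of_tangent (htan : ExchangeRelation q (fun n ↦ tangent (f n) (f (n + 1))) a b)
    (h : ExchangeRelation q f (a + 1) b) : ExchangeRelation q f a (b + 1) := by
  have hsnd := congrArg snd htan
  simp only [snd_add, snd_mul, snd_smul, fst_tangent, snd_tangent, smul_eq_mul, op_smul_eq_mul,
    Units.smul_def] at hsnd
  simp only [ExchangeRelation, Units.smul_def] at h ⊢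
  linear_combination (norm := module) hsnd - h

end ExchangeRelation

end ExchangeRelation

section IsInverseOn

variable {𝕜 R : Type*} [CommRing 𝕜] [Ring R] [Algebra 𝕜 R] {q : 𝕜ˣ} {j : ℤ}
  {I : Set ℤ} {x y : ℤ → ℤ → R} {z : R} {α n : ℤ}

/-- The families `x α n` and `y α n` are inverse to each other for `α ∈ I`, and both are extended
by zero to the indices `α ∉ I`. -/
structure IsInverseOn (I : Set ℤ) (x y : ℤ → ℤ → R) : Prop where
  mul_inv : ∀ ⦃α⦄, α ∈ I → ∀ n, x α n * y α n = 1
  inv_mul : ∀ ⦃α⦄, α ∈ I → ∀ n, y α n * x α n = 1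
  left_eq_zero : ∀ ⦃α⦄, α ∉ I → ∀ n, x α n = 0
  right_eq_zero : ∀ ⦃α⦄, α ∉ I → ∀ n, y α n = 0

namespace IsInverseOn

theorem qCommute_right (h : IsInverseOn I x y) (hz : QCommute q j z (x α n)) :
    QCommute q (-j) z (y α n) := by
  by_cases hα : α ∈ I
  · exact hz.inv_right (h.mul_inv hα n) (h.inv_mul hα n)
  · exact h.right_eq_zero hα n ▸ QCommute.zero_right z

theorem qCommute_left (h : IsInverseOn I x y) (hz : QCommute q j (x α n) z) :
    QCommute q (-j) (y α n) z := by
  simpa using (h.qCommute_right hz.symm).symm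

theorem inv_mul_mul_inv (h : IsInverseOn I x y) (α m n : ℤ) :
    y α n * x α n * y α m = y α m := by
  by_cases hα : α ∈ I
  · rw [h.inv_mul hα, one_mul]
  · simp [h.right_eq_zero hα]

theorem mul_inv_mul (h : IsInverseOn I x y) (α m n : ℤ) :
    x α m * (y α n * x α n) = x α m := by
  by_cases hα : α ∈ I
  · rw [h.inv_mul hα, mul_one]
  · simp [h.left_eq_zero hα]

theorem tangent_logDeriv (h : IsInverseOn I x y) (u : ℤ → ℤ → R) :
    IsInverseOn I (fun α n ↦ tangent (x α n) (u α n * x α n))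
      (fun α n ↦ tangent (y α n) (-(y α n * u α n))) where
  mul_inv α hα n := by
    ext
    · simp [h.mul_inv hα]
    · simp [mul_assoc, h.mul_inv hα, ← mul_assoc (x α n) (y α n)]
  inv_mul α hα n := by
    ext
    · simp [h.inv_mul hα]
    · simp [mul_assoc]
  left_eq_zero α hα n := by ext <;> simp [h.left_eq_zero hα]
  right_eq_zero α hα n := by ext <;> simp [h.right_eq_zero hα]

end IsInverseOn

end IsInverseOn

section RatioSystem

universe u v

variable {𝕜 : Type u} {R : Type v} [CommRing 𝕜] [Ring R] [Algebra 𝕜 R] {q : 𝕜ˣ} {I : Set ℤ}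
  {x y : ℤ → ℤ → R}

/-- The relations between the ratios `x α n = M α n * (M (α + 1) n)⁻¹` of neighbouring members of
a solution of the M-system and their inverses `y α n`. -/
structure RatioSystem (q : 𝕜ˣ) (I : Set ℤ) (x y : ℤ → ℤ → R) : Prop
    extends IsInverseOn I x y where
  qCommute_same : ∀ α β n, QCommute q 0 (x α n) (x β n)
  qCommute_succ : ∀ α β n, QCommute q (if α = β then 1 else 0) (x α n) (x β (n + 1))
  evolution : ∀ α n, x α (n + 1 + 1) * (y α (n + 1) - y (α + 1) (n + 1)) =
    (x α (n + 1) - x (α - 1) (n + 1)) * y α n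

/-- The growth `x α (n + 1) * (x α n)⁻¹` of a ratio in one time step. -/
def timeRatio (x y : ℤ → ℤ → R) (α n : ℤ) : R :=
  x α (n + 1) * y α n

/-- The quotient `x α (n + 1) * (x (α + 1) n)⁻¹` of diagonally adjacent ratios. -/
def diagRatio (x y : ℤ → ℤ → R) (α n : ℤ) : R :=
  x α (n + 1) * y (α + 1) n

/-- The logarithmic derivative of `x α n` along the flow that moves the last ratio by one time
step. -/
def velocity (x y : ℤ → ℤ → R) (α n : ℤ) : R :=
  timeRatio x y α n - diagRatio x y α n

theorem velocity_eq_mul_sub (x y : ℤ → ℤ → R) (α n : ℤ) :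
    velocity x y α n = x α (n + 1) * (y α n - y (α + 1) n) :=
  (mul_sub _ _ _).symm

namespace RatioSystem

theorem qCommute_inv_same (S : RatioSystem q I x y) (α β n : ℤ) :
    QCommute q 0 (x α n) (y β n) := by
  simpa using S.qCommute_right (S.qCommute_same α β n)

theorem qCommute_succ_inv (S : RatioSystem q I x y) (α β n : ℤ) :
    QCommute q (if α = β then 1 else 0) (x β (n + 1)) (y α n) := by
  simpa using S.qCommute_right (S.qCommute_succ α β n).symm

theorem qCommute_timeRatio (S : RatioSystem q I x y) (α β n : ℤ) :
    QCommute q (if α = β then 1 else 0) (x α n) (timeRatio x y β n) := by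
  simpa [timeRatio] using (S.qCommute_succ α β n).mul_right (S.qCommute_inv_same α β n)

theorem qCommute_diagRatio (S : RatioSystem q I x y) (α β n : ℤ) :
    QCommute q (if α = β then 1 else 0) (x α n) (diagRatio x y β n) := by
  simpa [diagRatio] using (S.qCommute_succ α β n).mul_right (S.qCommute_inv_same α (β + 1) n)

theorem qCommute_succ_timeRatio (S : RatioSystem q I x y) (α β n : ℤ) :
    QCommute q (if α = β then 1 else 0) (x β (n + 1)) (timeRatio x y α n) := by
  simpa [timeRatio] using (S.qCommute_same β α (n + 1)).mul_right (S.qCommute_succ_inv α β n)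

theorem qCommute_succ_diagRatio (S : RatioSystem q I x y) (α β n : ℤ) :
    QCommute q (if α + 1 = β then 1 else 0) (x β (n + 1)) (diagRatio x y α n) := by
  simpa [diagRatio] using (S.qCommute_same β α (n + 1)).mul_right (S.qCommute_succ_inv (α + 1) β n)

theorem velocity_succ (S : RatioSystem q I x y) (α n : ℤ) :
    velocity x y α (n + 1) = timeRatio x y α n - diagRatio x y (α - 1) n := by
  rw [velocity_eq_mul_sub, S.evolution, timeRatio, diagRatio, sub_add_cancel, sub_mul]

theorem diagRatio_mul_velocity (S : RatioSystem q I x y) (α n : ℤ) :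
    diagRatio x y α (n + 1) * velocity x y (α + 1) (n + 1) =
      velocity x y α (n + 1) * diagRatio x y α n := by
  rw [S.velocity_succ, velocity_eq_mul_sub, add_sub_cancel_right]
  simp only [timeRatio, diagRatio]
  calc
    _ = x α (n + 1 + 1) * (y (α + 1) (n + 1) * x (α + 1) (n + 1) * y (α + 1) n)
        - x α (n + 1 + 1) * y (α + 1) (n + 1) * x α (n + 1) * y (α + 1) n := by noncomm_ring
    _ = x α (n + 1 + 1) * (y α (n + 1) * x α (n + 1)) * y (α + 1) n
        - x α (n + 1 + 1) * y (α + 1) (n + 1) * x α (n + 1) * y (α + 1) n := by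
      rw [S.inv_mul_mul_inv, S.mul_inv_mul]
    _ = _ := by noncomm_ring

theorem tangent_qCommute_same (S : RatioSystem q I x y) (α β n : ℤ) :
    QCommute q 0 (tangent (x α n) (velocity x y α n * x α n))
      (tangent (x β n) (velocity x y β n * x β n)) := by
  rcases eq_or_ne α β with rfl | hαβ
  · exact QCommute.refl _
  · have htime (γ δ : ℤ) (h : γ ≠ δ) : QCommute q 0 (x γ n) (timeRatio x y δ n) := by
      simpa [h] using S.qCommute_timeRatio γ δ n
    have hdiag (γ δ : ℤ) (h : γ ≠ δ) : QCommute q 0 (x γ n) (diagRatio x y δ n) := by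
      simpa [h] using S.qCommute_diagRatio γ δ n
    exact (S.qCommute_same α β n).tangent_logDeriv (htime β α hαβ.symm) (hdiag β α hαβ.symm)
      (htime α β hαβ) (hdiag α β hαβ) (absurd rfl) (absurd rfl)

theorem tangent_qCommute_succ (S : RatioSystem q I x y) (α β n : ℤ) :
    QCommute q (if α = β then 1 else 0) (tangent (x α n) (velocity x y α n * x α n))
      (tangent (x β (n + 1)) (velocity x y β (n + 1) * x β (n + 1))) := by
  have hdiag : QCommute q (if α + 1 = β then 1 else 0) (x α n) (diagRatio x y (β - 1) n) := by
    simpa only [eq_sub_iff_add_eq] using S.qCommute_diagRatio α (β - 1) n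
  rw [S.velocity_succ]
  refine (S.qCommute_succ α β n).tangent_logDeriv (S.qCommute_succ_timeRatio α β n)
    (S.qCommute_succ_diagRatio α β n) (S.qCommute_timeRatio α β n) hdiag ?_ ?_
  · intro h
    rw [show α = β by simpa using h]
  · intro h
    rw [show β - 1 = α by grind]

/-- With `D = diagRatio`, both sides reduce to
`D α (n + 1) * velocity (α + 1) (n + 1) - D (α - 1) (n + 1) * velocity α (n + 1)`. -/
theorem tangent_evolution (S : RatioSystem q I x y) (α n : ℤ) :
    velocity x y α (n + 1 + 1) * x α (n + 1 + 1) * (y α (n + 1) - y (α + 1) (n + 1))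
        - x α (n + 1 + 1) * (y α (n + 1) * velocity x y α (n + 1)
          - y (α + 1) (n + 1) * velocity x y (α + 1) (n + 1)) =
      (velocity x y α (n + 1) * x α (n + 1)
          - velocity x y (α - 1) (n + 1) * x (α - 1) (n + 1)) * y α n
        - (x α (n + 1) - x (α - 1) (n + 1)) * y α n * velocity x y α n := by
  have hD := S.diagRatio_mul_velocity α n
  have hD' := S.diagRatio_mul_velocity (α - 1) n
  have hvelocity : velocity x y α n = timeRatio x y α n - diagRatio x y α n := rfl
  rw [sub_add_cancel] at hD'
  rw [← S.evolution α n, mul_assoc, ← velocity_eq_mul_sub]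
  calc
    _ = velocity x y α (n + 1 + 1) * velocity x y α (n + 1)
        - timeRatio x y α (n + 1) * velocity x y α (n + 1)
        + diagRatio x y α (n + 1) * velocity x y (α + 1) (n + 1) := by
      simp only [timeRatio, diagRatio]; noncomm_ring
    _ = velocity x y α (n + 1) * diagRatio x y α n
        - velocity x y (α - 1) (n + 1) * diagRatio x y (α - 1) n := by
      rw [← hD, ← hD', S.velocity_succ α (n + 1)]; noncomm_ring
    _ = velocity x y α (n + 1) * timeRatio x y α n
        - velocity x y (α - 1) (n + 1) * diagRatio x y (α - 1) n
        - velocity x y α (n + 1) * velocity x y α n := by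
      rw [hvelocity]; noncomm_ring
    _ = _ := by
      simp only [timeRatio, diagRatio, sub_add_cancel]; noncomm_ring

theorem tangent (S : RatioSystem q I x y) :
    RatioSystem q I (fun α n ↦ tangent (x α n) (velocity x y α n * x α n))
      (fun α n ↦ tangent (y α n) (-(y α n * velocity x y α n))) where
  toIsInverseOn := S.tangent_logDeriv (velocity x y)
  qCommute_same := S.tangent_qCommute_same
  qCommute_succ := S.tangent_qCommute_succ
  evolution α n := by
    ext
    · simpa using S.evolution α n
    · have h := S.tangent_evolution α n
      simp only [snd_mul, fst_sub, snd_sub, fst_tangent, snd_tangent, smul_eq_mul,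
        op_smul_eq_mul]
      linear_combination (norm := noncomm_ring) h

theorem velocity_mul_self (S : RatioSystem q I x y) {α : ℤ} (hα : α ∈ I) (hα' : α + 1 ∉ I)
    (n : ℤ) : velocity x y α n * x α n = x α (n + 1) := by
  rw [velocity_eq_mul_sub, S.right_eq_zero hα', sub_zero, mul_assoc, S.inv_mul hα, mul_one]

/-- The induction is over all `𝕜`-algebras at once, since its step passes to the dual numbers. -/
theorem exchange_add_natCast {α : ℤ} (hα : α ∈ I) (hα' : α + 1 ∉ I) :
    ∀ (m : ℕ) {R : Type v} [Ring R] [Algebra 𝕜 R] {x y : ℤ → ℤ → R},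
      RatioSystem q I x y → ∀ a : ℤ, ExchangeRelation q (x α) a (a + m)
  | 0, _, _, _, x, _, S, a => by
    have h : x α a * x α (a + 1) = q • (x α (a + 1) * x α a) := by
      simpa [QCommute] using S.qCommute_succ α α a
    simp [ExchangeRelation, h]
  | 1, _, _, _, x, _, S, a => by
    have h := (qCommute_tangent_iff.1 (S.tangent_qCommute_succ α α a)).2
    simpa [ExchangeRelation, S.velocity_mul_self hα hα', add_comm (q • (x α (a + 1) * _))] using h
  | m + 2, _, _, _, x, _, S, a => by
    have htan := exchange_add_natCast hα hα' (m + 1) S.tangent a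
    have h := exchange_add_natCast hα hα' m S (a + 1)
    simp only [S.velocity_mul_self hα hα'] at htan
    rw [add_right_comm a 1] at h
    simpa [add_assoc, one_add_one_eq_two] using htan.succ_of_tangent (by simpa [add_assoc] using h)

theorem exchange (S : RatioSystem q I x y) {α : ℤ} (hα : α ∈ I) (hα' : α + 1 ∉ I) (a b : ℤ) :
    ExchangeRelation q (x α) a b := by
  wlog hab : a ≤ b generalizing a b
  · exact (this b a (le_of_not_ge hab)).symm
  · obtain ⟨m, rfl⟩ := Int.le.dest hab
    exact exchange_add_natCast hα hα' m S a

end RatioSystem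

end RatioSystem

section MSystem

variable {𝕜 R : Type*} [CommRing 𝕜] [Ring R] [Algebra 𝕜 R] {q : 𝕜ˣ} {I : Set ℤ}
  {M Mi : ℤ → ℤ → R}

/-- The M-system with its commutation relations for a family `M α n` with inverses `Mi α n`, where
`α` runs over `I` and `M α n` is read as zero for `α ∉ I`. -/
structure MSystem (q : 𝕜ˣ) (I : Set ℤ) (M Mi : ℤ → ℤ → R) : Prop extends IsInverseOn I M Mi where
  qCommute_same : ∀ α β n, QCommute q 0 (M α n) (M β n)
  qCommute_succ : ∀ α β n, QCommute q (min α β) (M α n) (M β (n + 1))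
  evolution : ∀ α ∈ I, ∀ n, q ^ α • (M α (n + 1 + 1) * M α n) =
    M α (n + 1) ^ 2 - M (α + 1) (n + 1) * M (α - 1) (n + 1)

/-- The ratio of two neighbouring members of the family `M`, whose inverses are `Mi`. -/
def ratio (M Mi : ℤ → ℤ → R) (α n : ℤ) : R :=
  M α n * Mi (α + 1) n

/-- The inverse of `ratio M Mi α n`. -/
def invRatio (M Mi : ℤ → ℤ → R) (α n : ℤ) : R :=
  M (α + 1) n * Mi α n

theorem IsInverseOn.ratio_invRatio (h : IsInverseOn I M Mi) :
    IsInverseOn {α | α ∈ I ∧ α + 1 ∈ I} (ratio M Mi) (invRatio M Mi) where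
  mul_inv α hα n := by
    rw [ratio, invRatio, mul_assoc, ← mul_assoc (Mi (α + 1) n), h.inv_mul hα.2, one_mul,
      h.mul_inv hα.1]
  inv_mul α hα n := by
    rw [ratio, invRatio, mul_assoc, ← mul_assoc (Mi α n), h.inv_mul hα.1, one_mul,
      h.mul_inv hα.2]
  left_eq_zero α hα n := by
    rcases not_and_or.1 hα with hα | hα
    · rw [ratio, h.left_eq_zero hα, zero_mul]
    · rw [ratio, h.right_eq_zero hα, mul_zero]
  right_eq_zero α hα n := by
    rcases not_and_or.1 hα with hα | hα
    · rw [invRatio, h.right_eq_zero hα, mul_zero]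
    · rw [invRatio, h.left_eq_zero hα, zero_mul]

namespace MSystem

theorem qCommute_inv_same (S : MSystem q I M Mi) (α β n : ℤ) :
    QCommute q 0 (M α n) (Mi β n) := by
  simpa using S.qCommute_right (S.qCommute_same α β n)

theorem inv_qCommute_inv_same (S : MSystem q I M Mi) (α β n : ℤ) :
    QCommute q 0 (Mi α n) (Mi β n) := by
  simpa using S.qCommute_left (S.qCommute_inv_same α β n)

theorem ratio_qCommute_same (S : MSystem q I M Mi) (α β n : ℤ) :
    QCommute q 0 (ratio M Mi α n) (ratio M Mi β n) := by
  have hM (γ : ℤ) : QCommute q 0 (M γ n) (ratio M Mi β n) := by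
    simpa [ratio] using (S.qCommute_same γ β n).mul_right (S.qCommute_inv_same γ (β + 1) n)
  simpa [ratio] using (hM α).mul_left (S.qCommute_left (hM (α + 1)))

theorem ratio_qCommute_succ_left (S : MSystem q I M Mi) (α β n : ℤ) :
    QCommute q (min α β - min (α + 1) β) (ratio M Mi α n) (M β (n + 1)) :=
  (S.qCommute_succ α β n).mul_left (S.qCommute_left (S.qCommute_succ (α + 1) β n))

theorem ratio_qCommute_succ (S : MSystem q I M Mi) (α β n : ℤ) :
    QCommute q (if α = β then 1 else 0) (ratio M Mi α n) (ratio M Mi β (n + 1)) := by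
  have h : QCommute q (min α β - min (α + 1) β + -(min α (β + 1) - min (α + 1) (β + 1)))
      (ratio M Mi α n) (ratio M Mi β (n + 1)) :=
    (S.ratio_qCommute_succ_left α β n).mul_right
      (S.qCommute_right (S.ratio_qCommute_succ_left α (β + 1) n))
  convert h using 1
  grind

theorem qCommute_invRatio (S : MSystem q I M Mi) (α n : ℤ) :
    QCommute q 1 (Mi (α + 1) (n + 1) * Mi α (n + 1)) (invRatio M Mi α n) := by
  have hinv (β : ℤ) :
      QCommute q (min (α + 1) β - min α β) (Mi β (n + 1)) (invRatio M Mi α n) := by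
    simpa using (S.qCommute_right
      (S.toIsInverseOn.ratio_invRatio.qCommute_left (S.ratio_qCommute_succ_left α β n))).symm
  convert (hinv (α + 1)).mul_left (hinv α) using 1
  grind

theorem mul_inv_sub_mul_inv (S : MSystem q I M Mi) {α β : ℤ} (hα : α ∈ I) (hβ : β ∈ I) (n : ℤ)
    (z : R) :
    M α n * Mi β n - z * Mi α n = (M α n ^ 2 - z * M β n) * (Mi α n * Mi β n) := by
  have hcomm : Mi α n * Mi β n = Mi β n * Mi α n := (S.inv_qCommute_inv_same α β n).commute
  calc
    _ = M α n * (M α n * Mi α n) * Mi β n - z * (M β n * Mi β n) * Mi α n := by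
      rw [S.mul_inv hα, S.mul_inv hβ, mul_one, mul_one]
    _ = M α n ^ 2 * (Mi α n * Mi β n) - z * M β n * (Mi β n * Mi α n) := by noncomm_ring
    _ = _ := by rw [← hcomm, ← sub_mul]

theorem invRatio_sub_invRatio (S : MSystem q I M Mi) {α : ℤ} (hα : α ∈ I) (hα' : α + 1 ∈ I)
    (n : ℤ) :
    invRatio M Mi α (n + 1) - invRatio M Mi (α + 1) (n + 1) =
      q ^ (α + 1) • (M (α + 1) (n + 1 + 1) * M (α + 1) n *
        (Mi (α + 1) (n + 1) * Mi α (n + 1))) := by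
  have h := S.evolution (α + 1) hα' n
  rw [add_sub_cancel_right] at h
  rw [invRatio, invRatio, S.mul_inv_sub_mul_inv hα' hα, ← h, smul_mul_assoc]

theorem ratio_sub_ratio (S : MSystem q I M Mi) {α : ℤ} (hα : α ∈ I) (hα' : α + 1 ∈ I) (n : ℤ) :
    ratio M Mi α (n + 1) - ratio M Mi (α - 1) (n + 1) =
      q ^ α • (M α (n + 1 + 1) * M α n * (Mi (α + 1) (n + 1) * Mi α (n + 1))) := by
  rw [ratio, ratio, sub_add_cancel, S.mul_inv_sub_mul_inv hα hα',
    ← (S.qCommute_same (α + 1) (α - 1) (n + 1)).commute.eq, ← S.evolution α hα n, smul_mul_assoc,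
    (S.inv_qCommute_inv_same α (α + 1) (n + 1)).commute.eq]

theorem ratio_evolution (S : MSystem q I M Mi) {α : ℤ} (hα : α ∈ I) (hα' : α + 1 ∈ I) (n : ℤ) :
    ratio M Mi α (n + 1 + 1) * (invRatio M Mi α (n + 1) - invRatio M Mi (α + 1) (n + 1)) =
      (ratio M Mi α (n + 1) - ratio M Mi (α - 1) (n + 1)) * invRatio M Mi α n := by
  have hleft : ratio M Mi α (n + 1 + 1) * M (α + 1) (n + 1 + 1) = M α (n + 1 + 1) := by
    rw [ratio, mul_assoc, S.inv_mul hα', mul_one]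
  have hright : M α n * invRatio M Mi α n = M (α + 1) n := by
    rw [invRatio, ← mul_assoc, (S.qCommute_same α (α + 1) n).commute.eq, mul_assoc, S.mul_inv hα,
      mul_one]
  rw [S.invRatio_sub_invRatio hα hα', S.ratio_sub_ratio hα hα']
  calc
    _ = q ^ (α + 1) • (M α (n + 1 + 1) * M (α + 1) n * (Mi (α + 1) (n + 1) * Mi α (n + 1))) := by
      rw [mul_smul_comm, ← hleft]; simp only [mul_assoc]
    _ = q ^ (α + 1) • (M α (n + 1 + 1) * (M α n * (invRatio M Mi α n *
        (Mi (α + 1) (n + 1) * Mi α (n + 1))))) := by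
      rw [← hright]; simp only [mul_assoc]
    _ = _ := by
      rw [smul_mul_assoc, mul_assoc _ _ (invRatio M Mi α n), S.qCommute_invRatio, zpow_add,
        mul_smul_comm, smul_smul, mul_assoc]

theorem ratioSystem (S : MSystem q I M Mi) :
    RatioSystem q {α | α ∈ I ∧ α + 1 ∈ I} (ratio M Mi) (invRatio M Mi) where
  toIsInverseOn := S.toIsInverseOn.ratio_invRatio
  qCommute_same := S.ratio_qCommute_same
  qCommute_succ := S.ratio_qCommute_succ
  evolution α n := by
    by_cases hα : α ∈ I ∧ α + 1 ∈ I
    · exact S.ratio_evolution hα.1 hα.2 n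
    · rw [S.toIsInverseOn.ratio_invRatio.left_eq_zero hα (n + 1 + 1),
        S.toIsInverseOn.ratio_invRatio.right_eq_zero hα n, zero_mul, mul_zero]

theorem exchange (S : MSystem q I M Mi) {α : ℤ} (hα : α ∈ I) (hα' : α + 1 ∈ I)
    (hα'' : α + 1 + 1 ∉ I) (a b : ℤ) : ExchangeRelation q (ratio M Mi α) a b :=
  S.ratioSystem.exchange ⟨hα, hα'⟩ (fun h ↦ hα'' h.2) a b

/-- The modes are `q ^ (-n) • ratio M Mi α n`, and powers of a scalar rescale the exchange
relation homogeneously. -/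
theorem exchange_zpow_neg_mul_mul_inv (S : MSystem q I M Mi) {α : ℤ} (hα : α ∈ I)
    (hα' : α + 1 ∈ I) (hα'' : α + 1 + 1 ∉ I) {u v : Rˣ}
    (hM : ∀ n, M (α + 1) n = ((u ^ n : Rˣ) : R) * (v : R))
    (hu : ∀ n, QCommute q (-α) (u : R) (M α n)) (hv : QCommute q (α + 1) (v : R) (u : R))
    (a b : ℤ) :
    ExchangeRelation q (fun n ↦ ((u ^ (-n) : Rˣ) : R) * M α n * ((v⁻¹ : Rˣ) : R)) a b := by
  have hinv (n : ℤ) : Mi (α + 1) n = (((u ^ n * v)⁻¹ : Rˣ) : R) :=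
    Units.eq_inv_of_mul_eq_one_left <| by rw [Units.val_mul, ← hM, S.mul_inv hα']
  have hratio (n : ℤ) :
      ((u ^ (-n) : Rˣ) : R) * M α n * ((v⁻¹ : Rˣ) : R) = q⁻¹ ^ n • ratio M Mi α n := by
    rw [(hu n).zpow_neg_mul_mul_inv hv, ← hinv, ratio, inv_zpow', neg_add_cancel_left, mul_one]
  simp only [hratio]
  exact (S.exchange hα hα' hα'' a b).zpow_smul q⁻¹

end MSystem

/-- Extension by zero of a family indexed by `0 ≤ α ≤ N` to all integers `α`. -/
def zeroExtend (N : ℕ) (M : ℕ → ℤ → R) (α n : ℤ) : R :=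
  if 0 ≤ α ∧ α ≤ (N : ℤ) then M α.toNat n else 0

theorem zeroExtend_natCast {N a : ℕ} (ha : a ≤ N) (M : ℕ → ℤ → R) (n : ℤ) :
    zeroExtend N M a n = M a n := by
  simp [zeroExtend, ha]

theorem zeroExtend_of_notMem {N : ℕ} {α : ℤ} (hα : α ∉ Set.Icc 0 (N : ℤ)) (M : ℕ → ℤ → R)
    (n : ℤ) : zeroExtend N M α n = 0 :=
  if_neg hα

theorem exists_natCast_of_mem_Icc {N : ℕ} {α : ℤ} (hα : α ∈ Set.Icc 0 (N : ℤ)) :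
    ∃ a ≤ N, (a : ℤ) = α :=
  ⟨α.toNat, by grind, by grind⟩

theorem IsInverseOn.zeroExtend {N : ℕ} {M Mi : ℕ → ℤ → R}
    (hmul_inv : ∀ α n, α ≤ N → M α n * Mi α n = 1) (hinv_mul : ∀ α n, α ≤ N → Mi α n * M α n = 1) :
    IsInverseOn (Set.Icc 0 (N : ℤ)) (zeroExtend N M) (zeroExtend N Mi) where
  mul_inv α hα n := by
    obtain ⟨a, ha, rfl⟩ := exists_natCast_of_mem_Icc hα
    simpa [zeroExtend_natCast ha] using hmul_inv a n ha
  inv_mul α hα n := by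
    obtain ⟨a, ha, rfl⟩ := exists_natCast_of_mem_Icc hα
    simpa [zeroExtend_natCast ha] using hinv_mul a n ha
  left_eq_zero α hα n := zeroExtend_of_notMem hα M n
  right_eq_zero α hα n := zeroExtend_of_notMem hα Mi n

theorem QCommute.zeroExtend {N : ℕ} {M : ℕ → ℤ → R} {e : ℤ → ℤ → ℤ} {m n : ℤ}
    (h : ∀ a b : ℕ, a ≤ N → b ≤ N → QCommute q (e a b) (M a m) (M b n)) (α β : ℤ) :
    QCommute q (e α β) (zeroExtend N M α m) (zeroExtend N M β n) := by
  by_cases hα : α ∈ Set.Icc 0 (N : ℤ)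
  · by_cases hβ : β ∈ Set.Icc 0 (N : ℤ)
    · obtain ⟨a, ha, rfl⟩ := exists_natCast_of_mem_Icc hα
      obtain ⟨b, hb, rfl⟩ := exists_natCast_of_mem_Icc hβ
      simpa only [zeroExtend_natCast ha, zeroExtend_natCast hb] using h a b ha hb
    · exact zeroExtend_of_notMem hβ M n ▸ QCommute.zero_right _
  · exact zeroExtend_of_notMem hα M m ▸ QCommute.zero_left _

/-- At `α = 0` the extended relation is `1 * 1 = 1 ^ 2 - M 1 n * 0`. -/
theorem zeroExtend_evolution {N : ℕ} {M : ℕ → ℤ → R} (hzero : ∀ n, M 0 n = 1)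
    (htop : ∀ n, M (N + 1) n = 0)
    (hevol : ∀ (α : ℕ) (n : ℤ), 1 ≤ α → α ≤ N →
      q ^ (α : ℤ) • (M α (n + 1) * M α (n - 1)) = M α n ^ 2 - M (α + 1) n * M (α - 1) n)
    {α : ℤ} (hα : α ∈ Set.Icc 0 (N : ℤ)) (n : ℤ) :
    q ^ α • (zeroExtend N M α (n + 1 + 1) * zeroExtend N M α n) =
      zeroExtend N M α (n + 1) ^ 2 -
        zeroExtend N M (α + 1) (n + 1) * zeroExtend N M (α - 1) (n + 1) := by
  obtain ⟨a, ha, rfl⟩ := exists_natCast_of_mem_Icc hα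
  have hsucc : zeroExtend N M (a + 1) (n + 1) = M (a + 1) (n + 1) := by
    rcases ha.lt_or_eq with ha | rfl
    · exact_mod_cast zeroExtend_natCast (Nat.succ_le_of_lt ha) M (n + 1)
    · rw [zeroExtend_of_notMem (by simp), htop]
  simp only [hsucc, zeroExtend_natCast ha]
  rcases a with _ | a
  · rw [zeroExtend_of_notMem (by simp)]
    simp [hzero]
  · have hpred : zeroExtend N M a (n + 1) = M a (n + 1) :=
      zeroExtend_natCast (Nat.le_of_succ_le ha) M (n + 1)
    simpa [hpred] using hevol (a + 1) (n + 1) (Nat.succ_pos a) ha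

theorem MSystem.zeroExtend {N : ℕ} {M Mi : ℕ → ℤ → R}
    (hmul_inv : ∀ α n, α ≤ N → M α n * Mi α n = 1) (hinv_mul : ∀ α n, α ≤ N → Mi α n * M α n = 1)
    (hzero : ∀ n, M 0 n = 1) (htop : ∀ n, M (N + 1) n = 0)
    (hsame : ∀ (α β : ℕ) (n : ℤ), α ≤ N → β ≤ N → QCommute q 0 (M α n) (M β n))
    (hsucc : ∀ (α β : ℕ) (n : ℤ), α ≤ N → β ≤ N →
      QCommute q (min α β) (M α n) (M β (n + 1)))
    (hevol : ∀ (α : ℕ) (n : ℤ), 1 ≤ α → α ≤ N →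
      q ^ (α : ℤ) • (M α (n + 1) * M α (n - 1)) = M α n ^ 2 - M (α + 1) n * M (α - 1) n) :
    MSystem q (Set.Icc 0 (N : ℤ)) (zeroExtend N M) (zeroExtend N Mi) where
  toIsInverseOn := .zeroExtend hmul_inv hinv_mul
  qCommute_same α β n := QCommute.zeroExtend (e := fun _ _ ↦ 0) (hsame · · n) α β
  qCommute_succ α β n := QCommute.zeroExtend (e := min) (hsucc · · n) α β
  evolution _ hα n := zeroExtend_evolution hzero htop hevol hα n

end MSystem

section CentralUnit

variable {R : Type*} [Ring R]

/-- A central unit of `R`, as a unit of the centre; it makes `R` an algebra over a commutative ring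
containing `q`. -/
def centralUnit (q : Rˣ) (hq : ∀ x : R, (q : R) * x = x * (q : R)) : (Subring.center R)ˣ where
  val := ⟨q, Subring.mem_center_iff.2 fun x ↦ (hq x).symm⟩
  inv := ⟨(q⁻¹ : Rˣ),
    Subring.mem_center_iff.2 fun x ↦ Commute.units_inv_right (hq x).symm⟩
  val_inv := Subtype.ext q.mul_inv
  inv_val := Subtype.ext q.inv_mul

theorem centralUnit_zpow_smul (q : Rˣ) (hq : ∀ x : R, (q : R) * x = x * (q : R)) (j : ℤ) (x : R) :
    centralUnit q hq ^ j • x = ((q ^ j : Rˣ) : R) * x := by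
  have hmap : Units.map (Subring.center R).subtype.toMonoidHom (centralUnit q hq) = q :=
    Units.ext rfl
  nth_rw 2 [← hmap]
  rw [← map_zpow]
  rfl

theorem centralUnit_inv_smul (q : Rˣ) (hq : ∀ x : R, (q : R) * x = x * (q : R)) (x : R) :
    (centralUnit q hq)⁻¹ • x = ((q⁻¹ : Rˣ) : R) * x := by
  simpa only [zpow_neg_one] using centralUnit_zpow_smul q hq (-1) x

theorem qCommute_centralUnit_iff {q : Rˣ} {hq : ∀ x : R, (q : R) * x = x * (q : R)} {j : ℤ}
    {x y : R} :
    QCommute (centralUnit q hq) j x y ↔ x * y = ((q ^ j : Rˣ) : R) * y * x := by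
  rw [QCommute, centralUnit_zpow_smul, mul_assoc]

end CentralUnit

theorem quantum_Q_opposite_current_exchange
    {R : Type*} [Ring R] (q A Δ : Rˣ)
    (hq : ∀ x : R, (q : R) * x = x * (q : R))
    (r : ℕ) (hr : 1 ≤ r)
    (M Mi : ℕ → ℤ → R)
    (hM0 : ∀ n : ℤ, M 0 n = 1)
    (hMtop : ∀ n : ℤ, M (r + 2) n = 0)
    (hMiL : ∀ (α : ℕ) (n : ℤ), α ≤ r + 1 → M α n * Mi α n = 1)
    (hMiR : ∀ (α : ℕ) (n : ℤ), α ≤ r + 1 → Mi α n * M α n = 1)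
    (hMsys : ∀ (α : ℕ) (n : ℤ), 1 ≤ α → α ≤ r + 1 →
      (q : R) ^ α * M α (n + 1) * M α (n - 1) = M α n ^ 2 - M (α + 1) n * M (α - 1) n)
    (hcom : ∀ (α β ε : ℕ) (n : ℤ), ε ≤ 1 → α ≤ r + 1 → β ≤ r + 1 →
      M α n * M β (n + (ε : ℤ)) = (q : R) ^ (ε * min α β) * M β (n + (ε : ℤ)) * M α n)
    (hAΔ : ∀ n : ℤ, M (r + 1) n = ((A ^ n : Rˣ) : R) * (Δ : R))
    (hΔM : ∀ (α : ℕ) (n : ℤ), 1 ≤ α → α ≤ r + 1 →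
      (Δ : R) * M α n = ((q ^ ((α : ℤ) * n) : Rˣ) : R) * M α n * (Δ : R))
    (hAM : ∀ (α : ℕ) (n : ℤ), 1 ≤ α → α ≤ r + 1 →
      (A : R) * M α n = ((q ^ (-(α : ℤ)) : Rˣ) : R) * M α n * (A : R))
    (hΔA : (Δ : R) * (A : R) = (q : R) ^ (r + 1) * (A : R) * (Δ : R))
    (hext : ∀ (α β : ℕ) (n p : ℤ), α ≤ r + 1 → β ≤ r + 1 →
      |p| ≤ |(β : ℤ) - (α : ℤ)| + 1 →
      M α n * M β (n + p) = ((q ^ (p * ((min α β : ℕ) : ℤ)) : Rˣ) : R) * M β (n + p) * M α n) :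
    ∀ F : ℤ → R, (∀ n : ℤ, F n = ((A ^ (-n) : Rˣ) : R) * M r n * ((Δ⁻¹ : Rˣ) : R)) →
      ∀ a b : ℤ,
        F (a + 1) * F b - ((q⁻¹ : Rˣ) : R) * F b * F (a + 1)
          + F (b + 1) * F a - ((q⁻¹ : Rˣ) : R) * F a * F (b + 1) = 0 := by
  intro F hF a b
  let c := centralUnit q hq
  have hM : MSystem c (Set.Icc 0 ((r + 1 : ℕ) : ℤ)) (zeroExtend (r + 1) M)
      (zeroExtend (r + 1) Mi) := by
    refine .zeroExtend hMiL hMiR hM0 hMtop (fun α β n hα hβ ↦ ?_) (fun α β n hα hβ ↦ ?_)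
      (fun α n hα hα' ↦ ?_)
    · simpa [c, qCommute_centralUnit_iff] using hcom α β 0 n zero_le_one hα hβ
    · rw [qCommute_centralUnit_iff, ← Nat.cast_min, zpow_natCast, Units.val_pow_eq_pow_val]
      simpa only [one_mul, Nat.cast_one] using hcom α β 1 n le_rfl hα hβ
    · rw [centralUnit_zpow_smul, zpow_natCast, Units.val_pow_eq_pow_val, ← mul_assoc]
      exact hMsys α n hα hα'
  have hA (n : ℤ) : QCommute c (-r) (A : R) (M r n) :=
    qCommute_centralUnit_iff.2 (hAM r n hr r.le_succ)
  have hΔ : QCommute c (r + 1) (Δ : R) (A : R) :=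
    qCommute_centralUnit_iff.2 (by exact_mod_cast hΔA)
  have hr_ext (n : ℤ) : zeroExtend (r + 1) M r n = M r n := zeroExtend_natCast r.le_succ M n
  have htop_ext (n : ℤ) : zeroExtend (r + 1) M (r + 1) n = M (r + 1) n :=
    zeroExtend_natCast le_rfl M n
  have hexch := hM.exchange_zpow_neg_mul_mul_inv (α := r) (by grind) (by grind) (by grind)
    (by simpa only [htop_ext] using hAΔ) (by simpa only [hr_ext] using hA) hΔ a b
  simp only [hr_ext, ← hF] at hexch
  simpa only [c, centralUnit_inv_smul, mul_assoc] using hexch.sub_inv_smul_eq_zero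
end
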